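/- Fix integers m > 4 and n ≥ 3, and a real number σ with σ − m + 4 ≥ 3, and place m candidates on the real line at y_1 = −σ + (m−2), y_2 = 0, y_3 = 1, …, y_m = m−2. Then every strategy-proof randomized two-winner scv mechanism for these m candidates and n voters has distortion at least (1/12)·min{n, √(σ − m + 4)} on this candidate configuration. -/

import Mathlib

open Finset

/-- Cost of a point `z` when the pair of candidates `(y k, y l)` is elected:
the distance to the closer of the two winners. -/
noncomputable def pairCost {α : Type*} [PseudoMetricSpace α] {m : ℕ}
    (y : Fin m → α) (k l : Fin m) (z : α) : ℝ :=
  min (dist z (y k)) (dist z (y l))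

/-- Social cost of the pair `(y k, y l)` on the location profile `x`. -/
noncomputable def socialCost {α : Type*} [PseudoMetricSpace α] {m n : ℕ}
    (y : Fin m → α) (k l : Fin m) (x : Fin n → α) : ℝ :=
  ∑ i, pairCost y k l (x i)

/-- Optimal social cost over all pairs of distinct candidates. -/
noncomputable def OPT {α : Type*} [PseudoMetricSpace α] {m n : ℕ}
    (y : Fin m → α) (x : Fin n → α) : ℝ :=
  sInf {c : ℝ | ∃ k l : Fin m, k ≠ l ∧ c = socialCost y k l x}

/-- A location profile `x` is consistent with an action profile `a` if every
voter votes for (one of) her nearest candidate(s). -/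
def Consistent {α : Type*} [PseudoMetricSpace α] {m n : ℕ}
    (y : Fin m → α) (a : Fin n → Fin m) (x : Fin n → α) : Prop :=
  ∀ (i : Fin n) (k : Fin m), dist (x i) (y (a i)) ≤ dist (x i) (y k)

/-- `f` is a randomized two-winner mechanism: on every action profile it gives a
probability distribution over unordered pairs of distinct candidates
(represented by a symmetric nonnegative function vanishing on the diagonal whose
values over the pairs `k < l` sum to one). -/
def IsRandMech {m n : ℕ} (f : (Fin n → Fin m) → Fin m → Fin m → ℝ) : Prop :=
  ∀ a : Fin n → Fin m, (∀ k l, 0 ≤ f a k l) ∧ (∀ k l, f a k l = f a l k) ∧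
    (∀ k, f a k k = 0) ∧
    ∑ p ∈ univ.filter (fun p : Fin m × Fin m => p.1 < p.2), f a p.1 p.2 = 1

/-- Expected cost of the point `z` under the lottery `f a`. -/
noncomputable def expCost {α : Type*} [PseudoMetricSpace α] {m n : ℕ}
    (y : Fin m → α) (f : (Fin n → Fin m) → Fin m → Fin m → ℝ)
    (a : Fin n → Fin m) (z : α) : ℝ :=
  ∑ p ∈ univ.filter (fun p : Fin m × Fin m => p.1 < p.2),
    f a p.1 p.2 * pairCost y p.1 p.2 z

/-- Expected social cost of the randomized mechanism `f` on action profile `a`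
and location profile `x`. -/
noncomputable def expSC {α : Type*} [PseudoMetricSpace α] {m n : ℕ}
    (y : Fin m → α) (f : (Fin n → Fin m) → Fin m → Fin m → ℝ)
    (a : Fin n → Fin m) (x : Fin n → α) : ℝ :=
  ∑ p ∈ univ.filter (fun p : Fin m × Fin m => p.1 < p.2),
    f a p.1 p.2 * socialCost y p.1 p.2 x

/-- Strategy-proofness of a randomized two-winner mechanism: voting for a
nearest candidate always minimizes a voter's expected cost, whatever the
other voters do. -/
def RandSP {α : Type*} [PseudoMetricSpace α] {m n : ℕ}
    (y : Fin m → α) (f : (Fin n → Fin m) → Fin m → Fin m → ℝ) : Prop :=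
  ∀ (i : Fin n) (xi : α) (a : Fin n → Fin m) (astar ai' : Fin m),
    (∀ k, dist xi (y astar) ≤ dist xi (y k)) →
    expCost y f (Function.update a i astar) xi ≤
      expCost y f (Function.update a i ai') xi


lemma aux_lin {ι : Type*} (s : Finset ι) (w F G H : ι → ℝ) (α β γ δ : ℝ)
    (hw : ∀ p, 0 ≤ w p) (h1 : ∑ p ∈ s, w p = 1)
    (h : ∀ p ∈ s, 0 ≤ α + β * F p + γ * G p + δ * H p) :
    0 ≤ α + β * ∑ p ∈ s, w p * F p + γ * ∑ p ∈ s, w p * G p + δ * ∑ p ∈ s, w p * H p := by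
  have h2 : 0 ≤ ∑ p ∈ s, w p * (α + β * F p + γ * G p + δ * H p) :=
    Finset.sum_nonneg fun p hp => mul_nonneg (hw p) (h p hp)
  have h3 : ∑ p ∈ s, w p * (α + β * F p + γ * G p + δ * H p) =
      α * ∑ p ∈ s, w p + β * ∑ p ∈ s, w p * F p + γ * ∑ p ∈ s, w p * G p
        + δ * ∑ p ∈ s, w p * H p := by
    simp only [Finset.mul_sum, ← Finset.sum_add_distrib]
    exact Finset.sum_congr rfl fun p _ => by ring
  rw [h3, h1] at h2
  linarith

lemma aux_cnt (n a t : ℕ) (h : a + t ≤ n) :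
    ∑ i : Fin n, (if a ≤ (i : ℕ) ∧ (i : ℕ) < a + t then (1 : ℝ) else 0) = t := by
  rw [Fin.sum_univ_eq_sum_range (fun i => if a ≤ i ∧ i < a + t then (1 : ℝ) else 0) n,
    ← Finset.sum_filter]
  have : (Finset.range n).filter (fun i => a ≤ i ∧ i < a + t) = Finset.Ico a (a + t) := by
    ext i; simp only [Finset.mem_filter, Finset.mem_range, Finset.mem_Ico]; omega
  rw [this]; simp

lemma pc_nonneg {m : ℕ} (y : Fin m → ℝ) (k l : Fin m) (z : ℝ) : 0 ≤ pairCost y k l z :=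
  le_min dist_nonneg dist_nonneg

lemma sc_ge {m n : ℕ} (y : Fin m → ℝ) (k l : Fin m) (x : Fin n → ℝ) (i : Fin n) :
    pairCost y k l (x i) ≤ socialCost y k l x :=
  Finset.single_le_sum (f := fun i => pairCost y k l (x i))
    (fun i _ => pc_nonneg y k l (x i)) (Finset.mem_univ i)

lemma sc_nonneg {m n : ℕ} (y : Fin m → ℝ) (k l : Fin m) (x : Fin n → ℝ) :
    0 ≤ socialCost y k l x :=
  Finset.sum_nonneg (fun i _ => pc_nonneg y k l (x i))

lemma OPT_le {m n : ℕ} (y : Fin m → ℝ) (x : Fin n → ℝ) (k l : Fin m) (h : k ≠ l) :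
    OPT y x ≤ socialCost y k l x := by
  apply csInf_le
  · refine ⟨0, ?_⟩
    rintro c ⟨k, l, _, rfl⟩
    exact sc_nonneg y k l x
  · exact ⟨k, l, h, rfl⟩

lemma OPT_pos {m n : ℕ} (hm : 2 ≤ m) (y : Fin m → ℝ) (x : Fin n → ℝ) (i j h : Fin n)
    (hij : x i ≠ x j) (hih : x i ≠ x h) (hjh : x j ≠ x h) : 0 < OPT y x := by
  have hfin : {c : ℝ | ∃ k l : Fin m, k ≠ l ∧ c = socialCost y k l x}.Finite := by
    apply (Set.finite_range (fun p : Fin m × Fin m => socialCost y p.1 p.2 x)).subset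
    rintro c ⟨k, l, _, rfl⟩
    exact ⟨(k, l), rfl⟩
  have hne : {c : ℝ | ∃ k l : Fin m, k ≠ l ∧ c = socialCost y k l x}.Nonempty :=
    ⟨_, ⟨0, by omega⟩, ⟨1, by omega⟩, by simp, rfl⟩
  obtain ⟨k, l, _, hc⟩ := hne.csInf_mem hfin
  have hc : OPT y x = socialCost y k l x := hc
  rw [hc]
  rcases (sc_nonneg y k l x).lt_or_eq with h0 | h0
  · exact h0
  exfalso
  have key : ∀ i, x i = y k ∨ x i = y l := by
    intro i
    have h1 := sc_ge y k l x i
    rw [← h0] at h1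
    rcases min_le_iff.mp h1 with h2 | h2
    · left; exact dist_le_zero.mp h2
    · right; exact dist_le_zero.mp h2
  rcases key i with h1 | h1 <;> rcases key j with h2 | h2 <;> rcases key h with h3 | h3 <;>
    simp_all

/-- The action profile: voter `0` votes `b`, voters `1..t` vote `e`, the rest vote `d`. -/
def prof {β : Type*} {n : ℕ} (b d e : β) (t : ℕ) (i : Fin n) : β :=
  if (i : ℕ) = 0 then b else if (i : ℕ) < 1 + t then e else d

set_option maxHeartbeats 4000000 in
theorem main_aux (m : ℕ) (hm : 4 < m) (n : ℕ) (hn : 3 ≤ n) (L D : ℝ) (hL : 1 ≤ L)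
    (y : Fin m → ℝ)
    (hy : ∀ k : Fin m, y k = if (k : ℕ) = 0 then -L else ((k : ℕ) : ℝ) - 1)
    (f : (Fin n → Fin m) → Fin m → Fin m → ℝ)
    (hmech : IsRandMech f) (hsp : RandSP y f) (hD : 0 ≤ D)
    (t : ℕ) (ht1 : 1 ≤ t) (ht : 2 * t + 1 ≤ n)
    (hdis : ∀ a x, Consistent y a x → 0 < OPT y x → expSC y f a x < D * OPT y x) :
    1 < 2 / L * (D * t) + (1 / t) * D := by
  have htR : (1 : ℝ) ≤ t := by exact_mod_cast ht1
  obtain ⟨c0, hc0⟩ : ∃ c : Fin m, (c : ℕ) = 0 := ⟨⟨0, by omega⟩, rfl⟩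
  obtain ⟨c1, hc1⟩ : ∃ c : Fin m, (c : ℕ) = 1 := ⟨⟨1, by omega⟩, rfl⟩
  obtain ⟨c2, hc2⟩ : ∃ c : Fin m, (c : ℕ) = 2 := ⟨⟨2, by omega⟩, rfl⟩
  obtain ⟨c3, hc3⟩ : ∃ c : Fin m, (c : ℕ) = 3 := ⟨⟨3, by omega⟩, rfl⟩
  have y0 : y c0 = -L := by rw [hy, hc0]; simp
  have y1 : y c1 = 0 := by rw [hy, hc1]; simp
  have y2 : y c2 = 1 := by rw [hy, hc2]; norm_num
  have y3 : y c3 = 2 := by rw [hy, hc3]; norm_num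
  obtain ⟨v0, hv0⟩ : ∃ c : Fin n, (c : ℕ) = 0 := ⟨⟨0, by omega⟩, rfl⟩
  obtain ⟨v1, hv1⟩ : ∃ c : Fin n, (c : ℕ) = 1 := ⟨⟨1, by omega⟩, rfl⟩
  obtain ⟨v2, hv2⟩ : ∃ c : Fin n, (c : ℕ) = 2 := ⟨⟨2, by omega⟩, rfl⟩
  obtain ⟨vl, hvl⟩ : ∃ c : Fin n, (c : ℕ) = n - 1 := ⟨⟨n - 1, by omega⟩, rfl⟩
  -- location cases
  have ycase : ∀ k : Fin m, (k = c0 ∧ y k = -L) ∨ (k = c1 ∧ y k = 0) ∨ (k = c2 ∧ y k = 1) ∨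
      (k = c3 ∧ y k = 2) ∨ (k ≠ c0 ∧ k ≠ c1 ∧ k ≠ c2 ∧ k ≠ c3 ∧ 3 ≤ y k) := by
    intro k
    by_cases h0 : (k : ℕ) = 0
    · left; have : k = c0 := Fin.ext (by omega)
      exact ⟨this, this ▸ y0⟩
    by_cases h1 : (k : ℕ) = 1
    · right; left; have : k = c1 := Fin.ext (by omega)
      exact ⟨this, this ▸ y1⟩
    by_cases h2 : (k : ℕ) = 2
    · right; right; left; have : k = c2 := Fin.ext (by omega)
      exact ⟨this, this ▸ y2⟩
    by_cases h3 : (k : ℕ) = 3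
    · right; right; right; left; have : k = c3 := Fin.ext (by omega)
      exact ⟨this, this ▸ y3⟩
    right; right; right; right
    refine ⟨?_, ?_, ?_, ?_, ?_⟩
    · rintro rfl; omega
    · rintro rfl; omega
    · rintro rfl; omega
    · rintro rfl; omega
    · rw [hy, if_neg h0]
      have : (4 : ℝ) ≤ ((k : ℕ) : ℝ) := by exact_mod_cast (by omega : 4 ≤ (k : ℕ))
      linarith
  -- nearest-candidate facts
  have near0 : ∀ k, dist (-L) (y c0) ≤ dist (-L) (y k) := by
    intro k; rw [y0, dist_self]; exact dist_nonneg
  have near1 : ∀ z, -L / 2 ≤ z → z ≤ 1 / 2 → ∀ k, dist z (y c1) ≤ dist z (y k) := by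
    intro z hz1 hz2 k
    rw [y1, Real.dist_eq, Real.dist_eq]
    rcases ycase k with ⟨_, h⟩ | ⟨_, h⟩ | ⟨_, h⟩ | ⟨_, h⟩ | ⟨_, _, _, _, h⟩ <;> rw [abs_le] <;>
      constructor <;> cases abs_cases (z - y k) <;> linarith
  have near2 : ∀ z, 1 / 2 ≤ z → z ≤ 3 / 2 → ∀ k, dist z (y c2) ≤ dist z (y k) := by
    intro z hz1 hz2 k
    rw [y2, Real.dist_eq, Real.dist_eq]
    rcases ycase k with ⟨_, h⟩ | ⟨_, h⟩ | ⟨_, h⟩ | ⟨_, h⟩ | ⟨_, _, _, _, h⟩ <;> rw [abs_le] <;>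
      constructor <;> cases abs_cases (z - y k) <;> linarith
  have near3 : ∀ z, 3 / 2 ≤ z → z ≤ 5 / 2 → ∀ k, dist z (y c3) ≤ dist z (y k) := by
    intro z hz1 hz2 k
    rw [y3, Real.dist_eq, Real.dist_eq]
    rcases ycase k with ⟨_, h⟩ | ⟨_, h⟩ | ⟨_, h⟩ | ⟨_, h⟩ | ⟨_, _, _, _, h⟩ <;> rw [abs_le] <;>
      constructor <;> cases abs_cases (z - y k) <;> linarith
  -- step 1: base profile
  have base : expCost y f (prof c0 c2 c3 0) (3 / 2) ≤ 1 / 2 := by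
    apply le_of_forall_pos_le_add
    intro η hη
    obtain ⟨ε, hε0, hε1, hε2⟩ : ∃ ε : ℝ, 0 < ε ∧ ε ≤ 1 / 2 ∧ D * ε ≤ η := by
      refine ⟨min (1 / 2) (η / (D + 1)), by positivity, min_le_left _ _, ?_⟩
      have h1 : min (1 / 2) (η / (D + 1)) ≤ η / (D + 1) := min_le_right _ _
      calc D * min (1 / 2) (η / (D + 1)) ≤ D * (η / (D + 1)) := by gcongr
        _ ≤ (D + 1) * (η / (D + 1)) := by gcongr; linarith
        _ = η := by field_simp
    let x : Fin n → ℝ := fun i => if i = v0 then -L else if i = v2 then 1 + ε else 1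
    have e10 : v1 ≠ v0 := by intro h; rw [h] at hv1; omega
    have e20 : v2 ≠ v0 := by intro h; rw [h] at hv2; omega
    have e12 : v1 ≠ v2 := by intro h; rw [h] at hv1; omega
    have x0 : x v0 = -L := by simp [x]
    have x1 : x v1 = 1 := by simp [x, e10, e12]
    have x2 : x v2 = 1 + ε := by simp [x, e20]
    have hcons : Consistent y (prof c0 c2 c3 0) x := by
      intro i
      by_cases hi : i = v0
      · have : prof c0 c2 c3 0 i = c0 := by simp [prof, hi, hv0]
        rw [this, hi, x0]; exact near0
      · have hi' : (i : ℕ) ≠ 0 := fun h => hi (Fin.ext (by omega))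
        have : prof c0 c2 c3 0 i = c2 := by simp [prof, hi']
        rw [this]
        simp only [x, if_neg hi]
        split_ifs <;> exact near2 _ (by linarith) (by linarith)
    have hpos : 0 < OPT y x := by
      refine OPT_pos (by omega) y x v0 v1 v2 ?_ ?_ ?_ <;> simp only [x0, x1, x2] <;>
        intro h <;> linarith
    have hopt : OPT y x ≤ ε := by
      refine (OPT_le y x c0 c2 (by intro h; rw [h] at hc0; omega)).trans ?_
      have : socialCost y c0 c2 x ≤ ∑ i : Fin n, if i = v2 then ε else 0 := by
        apply Finset.sum_le_sum
        intro i _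
        unfold pairCost
        rw [min_le_iff, y0, y2, Real.dist_eq, Real.dist_eq]
        by_cases hi : i = v0
        · left; rw [hi, x0]; simp [e20.symm]
        · right; simp only [x, if_neg hi]
          split_ifs
          · rw [abs_le]; constructor <;> linarith
          · simp
      simpa using this
    have h1 := hdis _ _ hcons hpos
    have h2 : D * OPT y x ≤ D * ε := by gcongr
    obtain ⟨m1, m2, m3, m4⟩ := hmech (prof c0 c2 c3 0)
    have h3 := aux_lin _ (fun p : Fin m × Fin m => f (prof c0 c2 c3 0) p.1 p.2)
      (fun p => pairCost y p.1 p.2 (3 / 2)) (fun p => socialCost y p.1 p.2 x) (fun _ => 0)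
      (1 / 2) (-1) 1 0 (fun p => m1 _ _) m4 (by
        rintro ⟨k, l⟩ _
        have := sc_ge y k l x v1
        rw [x1] at this
        have h4 : pairCost y k l (3 / 2) ≤ 1 / 2 + pairCost y k l 1 := by
          unfold pairCost
          rw [← min_add_add_left]
          have hh : ∀ k, dist (3 / 2) (y k) ≤ 1 / 2 + dist 1 (y k) := by
            intro k
            have := dist_triangle (3 / 2) 1 (y k)
            have h5 : dist (3 / 2 : ℝ) 1 = 1 / 2 := by rw [Real.dist_eq]; norm_num
            linarith
          exact min_le_min (hh k) (hh l)
        simp only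
        linarith)
    change 0 ≤ 1 / 2 + -1 * expCost y f (prof c0 c2 c3 0) (3 / 2) +
      1 * expSC y f (prof c0 c2 c3 0) x + 0 * _ at h3
    linarith
  -- step 2: moving voters from c2 to c3
  have path : ∀ j, j + 1 ≤ n → expCost y f (prof c0 c2 c3 j) (3 / 2) ≤ 1 / 2 := by
    intro j
    induction j with
    | zero => intro _; exact base
    | succ j ih =>
      intro hj
      refine le_trans ?_ (ih (by omega))
      have h := hsp ⟨j + 1, by omega⟩ (3 / 2) (prof c0 c2 c3 j) c3 c2
        (near3 _ le_rfl (by norm_num))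
      have e1 : Function.update (prof c0 c2 c3 j) (⟨j + 1, by omega⟩ : Fin n) c3 =
          prof c0 c2 c3 (j + 1) := by
        funext i
        by_cases hi : i = (⟨j + 1, by omega⟩ : Fin n)
        · subst hi; simp [prof]
        · have : (i : ℕ) ≠ j + 1 := fun h => hi (Fin.ext h)
          rw [Function.update_of_ne hi]
          unfold prof
          have h8 : (i : ℕ) < 1 + j ↔ (i : ℕ) < 1 + (j + 1) := by omega
          simp only [h8]
      have e2 : Function.update (prof c0 c2 c3 j) (⟨j + 1, by omega⟩ : Fin n) c2 =
          prof c0 c2 c3 j := by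
        funext i
        by_cases hi : i = (⟨j + 1, by omega⟩ : Fin n)
        · subst hi; simp [prof]; omega
        · rw [Function.update_of_ne hi]
      rwa [e1, e2] at h
  have hA := path t (by omega)
  -- step 3: profile A
  have hprofcons : ∀ b : Fin m, Consistent y (prof b c2 c3 t) (prof (n := n) (y b) 1 2 t) := by
    intro b i
    unfold prof
    split_ifs
    · intro k; rw [dist_self]; exact dist_nonneg
    · exact near3 _ (by norm_num) (by norm_num)
    · exact near2 _ (by norm_num) (by norm_num)
  have px0 : ∀ b : ℝ, prof (n := n) b 1 2 t v0 = b := by intro b; simp [prof, hv0]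
  have px1 : ∀ b : ℝ, prof (n := n) b 1 2 t v1 = 2 := by
    intro b; simp [prof, hv1]; omega
  have pxl : ∀ b : ℝ, prof (n := n) b 1 2 t vl = 1 := by
    intro b; unfold prof; rw [if_neg (by omega), if_neg (by omega)]
  have hprofpos : ∀ b : ℝ, b ≤ 0 → 0 < OPT y (prof (n := n) b 1 2 t) := by
    intro b hb
    refine OPT_pos (by omega) y _ v0 v1 vl ?_ ?_ ?_ <;> simp only [px0, px1, pxl] <;>
        intro h <;> linarith
  have optA : OPT y (prof (n := n) (-L) 1 2 t) ≤ t := by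
    refine (OPT_le y _ c0 c2 (by intro h; rw [h] at hc0; omega)).trans ?_
    rw [← aux_cnt n 1 t (by omega)]
    apply Finset.sum_le_sum
    intro i _
    unfold pairCost
    rw [min_le_iff, y0, y2, Real.dist_eq, Real.dist_eq]
    unfold prof
    by_cases hi : (i : ℕ) = 0
    · left; simp [hi]
    · right
      rw [if_neg hi]
      by_cases h2 : (i : ℕ) < 1 + t
      · rw [if_pos h2, if_pos ⟨by omega, h2⟩]; norm_num
      · rw [if_neg h2, if_neg (by omega)]; norm_num
  have optB : OPT y (prof (n := n) 0 1 2 t) ≤ 1 := by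
    refine (OPT_le y _ c2 c3 (by intro h; rw [h] at hc2; omega)).trans ?_
    have : socialCost y c2 c3 (prof (n := n) 0 1 2 t) ≤
        ∑ i : Fin n, if i = v0 then (1 : ℝ) else 0 := by
      apply Finset.sum_le_sum
      intro i _
      unfold pairCost
      rw [min_le_iff, y2, y3, Real.dist_eq, Real.dist_eq]
      unfold prof
      by_cases hi : i = v0
      · left; rw [if_pos hi, if_pos (by rw [hi]; exact hv0)]; norm_num
      · have hi' : (i : ℕ) ≠ 0 := fun h => hi (Fin.ext (by omega))
        rw [if_neg hi, if_neg hi']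
        split_ifs
        · right; norm_num
        · left; norm_num
    simpa using this
  have scA : expSC y f (prof c0 c2 c3 t) (prof (-L) 1 2 t) ≤ D * t := by
    have h1 := hprofcons c0
    rw [y0] at h1
    refine (hdis _ _ h1 (hprofpos _ (by linarith))).le.trans ?_
    gcongr
  have scB : expSC y f (prof c1 c2 c3 t) (prof 0 1 2 t) < D := by
    have h1 := hprofcons c1
    rw [y1] at h1
    refine (hdis _ _ h1 (hprofpos _ le_rfl)).trans_le ?_
    nlinarith
  -- step 4: strategy-proofness between A and B
  have sp : expCost y f (prof c1 c2 c3 t) (-L / 2) ≤ expCost y f (prof c0 c2 c3 t) (-L / 2) := by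
    have h := hsp v0 (-L / 2) (prof c0 c2 c3 t) c1 c0 (near1 _ le_rfl (by linarith))
    have e1 : ∀ b, Function.update (prof c0 c2 c3 t) v0 b = prof b c2 c3 t := by
      intro b
      funext i
      by_cases hi : i = v0
      · subst hi; simp [prof, hv0]
      · rw [Function.update_of_ne hi]
        have hi' : (i : ℕ) ≠ 0 := fun h => hi (Fin.ext (by omega))
        simp [prof, hi']
    rwa [e1, e1] at h
  have bA : expCost y f (prof c0 c2 c3 t) (-L / 2) ≤ L / 2 +
      2 / L * expSC y f (prof c0 c2 c3 t) (prof (-L) 1 2 t) := by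
    obtain ⟨m1, m2, m3, m4⟩ := hmech (prof c0 c2 c3 t)
    have h3 := aux_lin _ (fun p : Fin m × Fin m => f (prof c0 c2 c3 t) p.1 p.2)
      (fun p => pairCost y p.1 p.2 (-L / 2))
      (fun p => socialCost y p.1 p.2 (prof (n := n) (-L) 1 2 t))
      (fun p => pairCost y p.1 p.2 (3 / 2))
      (L / 2 - 1 / 2) (-1) (2 / L) 1 (fun p => m1 _ _) m4 (by
        rintro ⟨k, l⟩ _
        simp only
        have hge : 1 / 2 ≤ pairCost y k l (3 / 2) := by
          have hh : ∀ k, 1 / 2 ≤ dist (3 / 2) (y k) := by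
            intro k
            rw [Real.dist_eq]
            rcases ycase k with ⟨_, h⟩ | ⟨_, h⟩ | ⟨_, h⟩ | ⟨_, h⟩ | ⟨_, _, _, _, h⟩ <;>
              cases abs_cases (3 / 2 - y k) <;> linarith
          exact le_min (hh k) (hh l)
        by_cases hkl : k = c0 ∨ l = c0
        · have h4 : pairCost y k l (-L / 2) ≤ L / 2 := by
            have : dist (-L / 2) (y c0) ≤ L / 2 := by
              rw [y0, Real.dist_eq, abs_le]; constructor <;> linarith
            rcases hkl with h | h
            · rw [h]; exact (min_le_left _ _).trans this
            · rw [h]; exact (min_le_right _ _).trans this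
          have h5 : 0 ≤ 2 / L * socialCost y k l (prof (n := n) (-L) 1 2 t) :=
            mul_nonneg (by positivity) (sc_nonneg _ _ _ _)
          linarith
        · push Not at hkl
          have h4 : pairCost y k l (-L / 2) ≤ (L / 2 + 3 / 2) + pairCost y k l (3 / 2) := by
            unfold pairCost
            rw [← min_add_add_left]
            have hh : ∀ k, dist (-L / 2) (y k) ≤ (L / 2 + 3 / 2) + dist (3 / 2) (y k) := by
              intro k
              have := dist_triangle (-L / 2) (3 / 2) (y k)
              have h5 : dist (-L / 2 : ℝ) (3 / 2) = L / 2 + 3 / 2 := by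
                rw [Real.dist_eq, abs_of_nonpos] <;> linarith
              linarith
            exact min_le_min (hh k) (hh l)
          have h5 : L ≤ socialCost y k l (prof (n := n) (-L) 1 2 t) := by
            refine le_trans ?_ (sc_ge y k l _ v0)
            rw [px0]
            have hh : ∀ k, k ≠ c0 → L ≤ dist (-L) (y k) := by
              intro k hk
              rw [Real.dist_eq]
              rcases ycase k with ⟨h, _⟩ | ⟨_, h⟩ | ⟨_, h⟩ | ⟨_, h⟩ | ⟨_, _, _, _, h⟩
              · exact absurd h hk
              all_goals cases abs_cases (-L - y k) <;> linarith
            exact le_min (hh k hkl.1) (hh l hkl.2)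
          have h6 : 2 ≤ 2 / L * socialCost y k l (prof (n := n) (-L) 1 2 t) := by
            calc (2 : ℝ) = 2 / L * L := by field_simp
              _ ≤ _ := by gcongr
          linarith)
    change 0 ≤ L / 2 - 1 / 2 + -1 * expCost y f (prof c0 c2 c3 t) (-L / 2) +
      2 / L * expSC y f (prof c0 c2 c3 t) (prof (-L) 1 2 t) +
      1 * expCost y f (prof c0 c2 c3 t) (3 / 2) at h3
    linarith
  have bB : L / 2 + 1 ≤ expCost y f (prof c1 c2 c3 t) (-L / 2) +
      1 / t * expSC y f (prof c1 c2 c3 t) (prof 0 1 2 t) := by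
    obtain ⟨m1, m2, m3, m4⟩ := hmech (prof c1 c2 c3 t)
    have h3 := aux_lin _ (fun p : Fin m × Fin m => f (prof c1 c2 c3 t) p.1 p.2)
      (fun p => pairCost y p.1 p.2 (-L / 2))
      (fun p => socialCost y p.1 p.2 (prof (n := n) 0 1 2 t))
      (fun p => 0)
      (-(L / 2 + 1)) 1 (1 / t) 0 (fun p => m1 _ _) m4 (by
        rintro ⟨k, l⟩ hlt
        simp only
        by_cases hkl : k = c2 ∧ l = c3
        · obtain ⟨rfl, rfl⟩ := hkl
          have h4 : L / 2 + 1 ≤ pairCost y k l (-L / 2) := by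
            apply le_min <;> rw [Real.dist_eq]
            · rw [y2]; cases abs_cases (-L / 2 - 1) <;> linarith
            · rw [y3]; cases abs_cases (-L / 2 - 2) <;> linarith
          have h5 : 0 ≤ 1 / t * socialCost y k l (prof (n := n) 0 1 2 t) :=
            mul_nonneg (by positivity) (sc_nonneg _ _ _ _)
          linarith
        · have hlt' : k < l := by simpa using hlt
          have hlt'' : (k : ℕ) < l := hlt'
          have h4 : L / 2 ≤ pairCost y k l (-L / 2) := by
            have hh : ∀ k, L / 2 ≤ dist (-L / 2) (y k) := by
              intro k
              rw [Real.dist_eq]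
              rcases ycase k with ⟨_, h⟩ | ⟨_, h⟩ | ⟨_, h⟩ | ⟨_, h⟩ | ⟨_, _, _, _, h⟩ <;>
                cases abs_cases (-L / 2 - y k) <;> linarith
            exact le_min (hh k) (hh l)
          have d2 : ∀ k, k ≠ c2 → 1 ≤ dist 1 (y k) := by
            intro k hk
            rw [Real.dist_eq]
            rcases ycase k with ⟨_, h⟩ | ⟨_, h⟩ | ⟨h, _⟩ | ⟨_, h⟩ | ⟨_, _, _, _, h⟩
            case inr.inr.inl => exact absurd h hk
            all_goals cases abs_cases (1 - y k) <;> linarith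
          have d3 : ∀ k, k ≠ c3 → 1 ≤ dist 2 (y k) := by
            intro k hk
            rw [Real.dist_eq]
            rcases ycase k with ⟨_, h⟩ | ⟨_, h⟩ | ⟨_, h⟩ | ⟨h, _⟩ | ⟨_, _, _, _, h⟩
            case inr.inr.inr.inl => exact absurd h hk
            all_goals cases abs_cases (2 - y k) <;> linarith
          have h5 : (t : ℝ) ≤ socialCost y k l (prof (n := n) 0 1 2 t) := by
            by_cases h3 : k ≠ c3 ∧ l ≠ c3
            · rw [← aux_cnt n 1 t (by omega)]
              apply Finset.sum_le_sum
              intro i _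
              split_ifs with hi
              · unfold prof
                rw [if_neg (by omega), if_pos (by omega)]
                exact le_min (d3 k h3.1) (d3 l h3.2)
              · exact pc_nonneg _ _ _ _
            · have h2 : k ≠ c2 ∧ l ≠ c2 := by
                constructor
                · rintro rfl
                  apply h3
                  exact ⟨by rintro rfl; omega, fun h => hkl ⟨rfl, h⟩⟩
                · rintro rfl
                  apply h3
                  exact ⟨by rintro rfl; omega, by rintro rfl; omega⟩
              rw [← aux_cnt n (1 + t) t (by omega)]
              apply Finset.sum_le_sum
              intro i _
              split_ifs with hi
              · unfold prof
                rw [if_neg (by omega), if_neg (by omega)]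
                exact le_min (d2 k h2.1) (d2 l h2.2)
              · exact pc_nonneg _ _ _ _
          have h6 : 1 ≤ 1 / t * socialCost y k l (prof (n := n) 0 1 2 t) := by
            calc (1 : ℝ) = 1 / t * t := by field_simp
              _ ≤ _ := by gcongr
          linarith)
    change 0 ≤ -(L / 2 + 1) + 1 * expCost y f (prof c1 c2 c3 t) (-L / 2) +
      1 / t * expSC y f (prof c1 c2 c3 t) (prof 0 1 2 t) + 0 * _ at h3
    linarith
  have u1 : 2 / L * expSC y f (prof c0 c2 c3 t) (prof (-L) 1 2 t) ≤ 2 / L * (D * t) := by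
    gcongr
  have u2 : 1 / t * expSC y f (prof c1 c2 c3 t) (prof 0 1 2 t) < 1 / t * D := by
    gcongr
  linarith

/-- `m > 4` candidates on the real line at `-σ+(m-2), 0, 1, ..., m-2`
(with `σ - m + 4 ≥ 3`): every strategy-proof randomized two-winner scv
mechanism has distortion at least `(1/12) · min {n, √(σ - m + 4)}`. -/
theorem stmt2 (m : ℕ) (hm : 4 < m) (n : ℕ) (hn : 3 ≤ n) (σ : ℝ)
    (hσ : 3 ≤ σ - (m : ℝ) + 4)
    (y : Fin m → ℝ)
    (hy : ∀ k : Fin m,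
      y k = if (k : ℕ) = 0 then -σ + ((m : ℝ) - 2) else ((k : ℕ) : ℝ) - 1)
    (f : (Fin n → Fin m) → Fin m → Fin m → ℝ)
    (hmech : IsRandMech f) (hsp : RandSP y f) :
    ∃ (a : Fin n → Fin m) (x : Fin n → ℝ), Consistent y a x ∧
      (1 / 12) * min (n : ℝ) (Real.sqrt (σ - (m : ℝ) + 4)) ≤
        expSC y f a x / OPT y x := by

  by_contra hcon
  push Not at hcon
  set S := σ - (m : ℝ) + 4 with hS
  set M := min (n : ℝ) (Real.sqrt S) with hM
  have hnR : (3 : ℝ) ≤ n := by exact_mod_cast hn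
  have hM0 : 3 / 2 ≤ M := by
    apply le_min
    · linarith
    · apply Real.le_sqrt_of_sq_le; norm_num; linarith
  have hMn : M ≤ n := min_le_left _ _
  have hMS : M ^ 2 ≤ S := by
    have h1 : M ≤ Real.sqrt S := min_le_right _ _
    calc M ^ 2 ≤ (Real.sqrt S) ^ 2 := by gcongr
      _ = S := Real.sq_sqrt (by linarith)
  have hL : 1 ≤ S - 2 := by linarith
  have t1 : 1 ≤ ⌈M / 6⌉₊ := Nat.ceil_pos.mpr (by linarith)
  have t2 : M / 6 ≤ ⌈M / 6⌉₊ := Nat.le_ceil _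
  have t3 : (⌈M / 6⌉₊ : ℝ) < M / 6 + 1 := Nat.ceil_lt_add_one (by linarith)
  have t4 : ⌈M / 6⌉₊ ≤ (n + 5) / 6 := by
    have h1 : (6 : ℝ) * ⌈M / 6⌉₊ < n + 6 := by linarith
    have h2 : 6 * ⌈M / 6⌉₊ < n + 6 := by exact_mod_cast h1
    omega
  generalize ⌈M / 6⌉₊ = t at t1 t2 t3 t4
  have key := main_aux m hm n hn (S - 2) (1 / 12 * M) hL y (by
      intro k; rw [hy]; congr 1; rw [hS]; ring) f hmech hsp (by linarith) t t1 (by omega) (by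
      intro a x hc hp
      have := hcon a x hc
      rwa [div_lt_iff₀ hp] at this)
  have htR : (1 : ℝ) ≤ t := by exact_mod_cast t1
  have k1 : 2 / (S - 2) * (1 / 12 * M * t) ≤ 1 / 2 := by
    rw [div_mul_eq_mul_div, div_le_iff₀ (by linarith)]
    have : M * t ≤ M * M := by
      apply mul_le_mul_of_nonneg_left <;> linarith
    nlinarith
  have k2 : 1 / (t : ℝ) * (1 / 12 * M) ≤ 1 / 2 := by
    rw [div_mul_eq_mul_div, div_le_iff₀ (by linarith)]
    linarith
  linarith
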